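/- arXiv:math/0511345 — 2 statements merged into one kernel-verified Lean document; each statement's English description precedes it below -/
import Mathlib

section
/- Let R be a scalar local noetherian semiprime ring of finite global dimension. Then R is a domain. (Walker's theorem.) -/
open CategoryTheory Opposite

universe u

/-- Vanishing of the derived functor `Ext` in a positive degree implies vanishing of `Abelian.Ext`. -/
theorem subsingleton_abelianExt_succ {R : Type u} [Ring R] (M N : ModuleCat.{u} R) (n : ℕ)
    (h : Subsingleton (((Ext ℤ (ModuleCat.{u} R) (n + 1)).obj (op M)).obj N)) :
    Subsingleton (Abelian.Ext.{u} M N (n + 1)) := by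
  let P : ProjectiveResolution M := ProjectiveResolution.of M
  have hz : Limits.IsZero (((Ext ℤ (ModuleCat.{u} R) (n + 1)).obj (op M)).obj N) :=
    ModuleCat.isZero_of_subsingleton _
  have hz' := hz.of_iso (P.isoExt (R := ℤ) (n + 1) N).symm
  rw [← HomologicalComplex.exactAt_iff_isZero_homology,
    HomologicalComplex.exactAt_iff' _ n (n + 1) (n + 2) (by simp) (by simp),
    ShortComplex.moduleCat_exact_iff] at hz'
  refine subsingleton_of_forall_eq 0 fun e ↦ ?_
  obtain ⟨f, hf, rfl⟩ := P.extMk_surjective e (n + 2) rfl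
  rw [P.extMk_eq_zero_iff f (n + 2) rfl hf n rfl]
  exact hz' f hf

theorem hasProjectiveDimensionLT_of_subsingleton_ext {R : Type u} [Ring R] (n : ℕ)
    (h : ∀ M N : ModuleCat.{u} R, Subsingleton (Abelian.Ext.{u} M N (n + 1)))
    (M : ModuleCat.{u} R) : HasProjectiveDimensionLT M (n + 1) := by
  rw [hasProjectiveDimensionLT_iff]
  intro i hi
  induction i, hi using Nat.le_induction generalizing M with
  | base => exact fun N e ↦ (h M N).elim _ _
  | succ i hi ih =>
    intro N e
    obtain ⟨e', rfl⟩ := Abelian.Ext.contravariant_sequence_exact₃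
      M.shortExact_projectiveShortComplex N e
      (Abelian.Ext.eq_zero_of_hasProjectiveDimensionLT _ 1 (by omega)) (add_comm 1 i)
    rw [ih _ e', Abelian.Ext.comp_zero]

/-- The length of `Hom_R(M, E)` as a module over the endomorphism ring of `E`. -/
noncomputable def homLength (R M E : Type*) [Ring R] [AddCommGroup M] [Module R M]
    [AddCommGroup E] [Module R E] : ℕ∞ :=
  Module.length (Module.End R E) (M →ₗ[R] E)

/-- A module is nonsingular if no nonzero element is annihilated by an essential left ideal. -/
def IsNonsingular (R E : Type*) [Ring R] [AddCommGroup E] [Module R E] : Prop :=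
  ∀ e : E, (∀ x : R, x ≠ 0 → ∃ r : R, r * x ≠ 0 ∧ (r * x) • e = 0) → e = 0

/-- A left ideal is uniform if it is nonzero and any two nonzero left ideals inside it meet. -/
def IsUniformIdeal {R : Type*} [Ring R] (U : Ideal R) : Prop :=
  U ≠ ⊥ ∧ ∀ V W : Ideal R, V ≤ U → W ≤ U → Disjoint V W → V = ⊥ ∨ W = ⊥

section HomLength

variable {R M M' M'' E : Type u} [Ring R] [AddCommGroup M] [Module R M] [AddCommGroup M']
  [Module R M'] [AddCommGroup M''] [Module R M''] [AddCommGroup E] [Module R E]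

theorem homLength_congr (e : M ≃ₗ[R] M') : homLength R M E = homLength R M' E :=
  (LinearEquiv.ofLinearMap (LinearMap.lcomp (Module.End R E) E e.symm.toLinearMap)
    (LinearMap.lcomp (Module.End R E) E e.toLinearMap)
    (by ext; simp) (by ext; simp)).length_eq

theorem homLength_le_of_surjective (f : M →ₗ[R] M') (hf : Function.Surjective f) :
    homLength R M' E ≤ homLength R M E :=
  Module.length_le_of_injective (LinearMap.lcomp (Module.End R E) E f)
    (LinearMap.lcomp_injective_of_surjective f hf)

theorem homLength_prod : homLength R (M × M') E = homLength R M E + homLength R M' E := by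
  rw [homLength, ← (LinearMap.coprodEquiv (R := R) (M := M) (M₂ := M') (M₃ := E)
    (Module.End R E)).length_eq, Module.length_prod]
  rfl

theorem homLength_pi (k : ℕ) : homLength R (Fin k → R) E = k * homLength R R E := by
  rw [homLength, ← (LinearMap.lsum R (fun _ : Fin k ↦ R) (M := E) (Module.End R E)).length_eq,
    Module.length_pi_of_fintype]
  simp [homLength]

theorem homLength_eq_add_of_exact [Module.Injective R E] {f : M' →ₗ[R] M} {g : M →ₗ[R] M''}
    (hf : Function.Injective f) (hg : Function.Surjective g) (h : Function.Exact f g) :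
    homLength R M E = homLength R M'' E + homLength R M' E := by
  refine Module.length_eq_add_of_exact (LinearMap.lcomp (Module.End R E) E g)
    (LinearMap.lcomp (Module.End R E) E f) (LinearMap.lcomp_injective_of_surjective g hg)
    (fun φ ↦ Module.Injective.extension_property R E _ _ f hf φ) fun φ ↦ ⟨fun hφ ↦ ?_, ?_⟩
  · have hker : LinearMap.ker g ≤ LinearMap.ker φ := by
      intro x hx
      obtain ⟨y, rfl⟩ := (h x).1 hx
      exact LinearMap.congr_fun hφ y
    refine ⟨(LinearMap.ker g).liftQ φ hker ∘ₗ (g.quotKerEquivOfSurjective hg).symm, ?_⟩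
    ext x
    have : (g.quotKerEquivOfSurjective hg).symm (g x) = Submodule.Quotient.mk x := by
      rw [LinearEquiv.symm_apply_eq]; rfl
    simp [this]
  · rintro ⟨ψ, rfl⟩
    ext x
    simp [h.apply_apply_eq_zero]

end HomLength

section Nonsingular

variable {R E : Type u} [Ring R] [AddCommGroup E] [Module R E]

/-- A semiprime left noetherian ring is left nonsingular. -/
theorem isNonsingular_self [IsNoetherianRing R]
    (hsemiprime : ∀ a : R, (∀ r : R, a * r * a = 0) → a = 0) : IsNonsingular R R := by
  simp only [IsNonsingular, smul_eq_mul]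
  by_contra! hne
  obtain ⟨a₀, ha₀⟩ := hne
  let S : Set R := {a | (∀ x : R, x ≠ 0 → ∃ r : R, r * x ≠ 0 ∧ r * x * a = 0) ∧ a ≠ 0}
  obtain ⟨_, ⟨a, ⟨hsing, ha⟩, rfl⟩, hmax⟩ := set_has_maximal_iff_noetherian.2 ‹_›
    ((fun a : R ↦ LinearMap.ker (LinearMap.toSpanSingleton R R a)) '' S) ⟨_, a₀, ha₀, rfl⟩
  refine ha (hsemiprime a fun r ↦ ?_)
  by_contra hne
  have hra : r * a ≠ 0 := fun h ↦ hne (by rw [mul_assoc, h, mul_zero])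
  have hsing' : ∀ x : R, x ≠ 0 → ∃ t : R, t * x ≠ 0 ∧ t * x * (a * r * a) = 0 := by
    intro x hx
    obtain ⟨t, ht, hta⟩ := hsing x hx
    exact ⟨t, ht, by rw [mul_assoc a, ← mul_assoc, hta, zero_mul]⟩
  refine hmax _ ⟨a * r * a, ⟨hsing', hne⟩, rfl⟩ (lt_of_le_not_ge ?_ ?_)
  · intro s hs
    simp only [LinearMap.mem_ker, LinearMap.toSpanSingleton_apply, smul_eq_mul] at hs ⊢
    rw [mul_assoc a, ← mul_assoc, hs, zero_mul]
  · intro hle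
    by_cases har : a * r = 0
    · exact hne (by rw [har, zero_mul])
    obtain ⟨t, ht, hta⟩ := hsing (a * r) har
    have : t ∈ LinearMap.ker (LinearMap.toSpanSingleton R R a) := hle (by
      simpa [mul_assoc] using hta)
    simp only [LinearMap.mem_ker, LinearMap.toSpanSingleton_apply, smul_eq_mul] at this
    exact ht (by rw [← mul_assoc, this, zero_mul])

/-- Essential extensions of a free cyclic module over a nonsingular ring are nonsingular. -/
theorem IsNonsingular.of_essential (hR : IsNonsingular R R) (e : E)
    (hess : ∀ n : E, n ≠ 0 → ∃ r a : R, r • n = a • e ∧ a ≠ 0) (he : ∀ r : R, r • e = 0 → r = 0) :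
    IsNonsingular R E := by
  intro n hn
  by_contra hne
  obtain ⟨r, a, hra, ha⟩ := hess n hne
  refine ha (hR a fun x hx ↦ ?_)
  have key : ∀ t : R, (t * (x * r)) • n = 0 → t * x * a = 0 := fun t ht ↦ he _ (by
    rw [mul_smul, ← hra, ← mul_smul, mul_assoc, ht])
  by_cases hxr : x * r = 0
  · exact ⟨1, by simpa using hx, key 1 (by simp [hxr])⟩
  · obtain ⟨t, ht, htn⟩ := hn _ hxr
    exact ⟨t, fun h ↦ ht (by rw [← mul_assoc, h, zero_mul]), key t htn⟩

/-- A nonsingular ring embeds into a nonsingular injective module. -/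
theorem exists_injective_isNonsingular (hR : IsNonsingular R R) :
    ∃ (E : Type u) (_ : AddCommGroup E) (_ : Module R E),
      Module.Injective R E ∧ IsNonsingular R E ∧ ∃ e : E, ∀ r : R, r • e = 0 → r = 0 := by
  let E₀ : ModuleCat.{u} R := Injective.under (ModuleCat.of R R)
  have hE₀ : Module.Injective R E₀ :=
    Module.injective_module_of_injective_object R E₀
      (inj := inferInstanceAs (Injective (Injective.under (ModuleCat.of R R))))
  let i : R →ₗ[R] E₀ := (Injective.ι (ModuleCat.of R R)).hom
  have hi : Function.Injective i := (ModuleCat.mono_iff_injective _).1 inferInstance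
  obtain ⟨K, hK⟩ : ∃ K, Maximal (fun K ↦ Disjoint K (LinearMap.range i)) K := by
    refine zorn_le₀ {K | Disjoint K (LinearMap.range i)} fun c hc hchain ↦
      ⟨sSup c, ?_, fun _ ↦ le_sSup⟩
    rw [Set.mem_ofPred_eq, hchain.directedOn.disjoint_sSup_left]
    exact hc
  let e : E₀ ⧸ K := Submodule.Quotient.mk (i 1)
  have hmk (a : R) : a • e = Submodule.Quotient.mk (i a) := by
    rw [← Submodule.Quotient.mk_smul, ← map_smul, smul_eq_mul, mul_one]
  have he : ∀ r : R, r • e = 0 → r = 0 := by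
    intro r hr
    rw [hmk, Submodule.Quotient.mk_eq_zero] at hr
    exact hi (by rw [Submodule.disjoint_def.1 hK.1 _ hr ⟨r, rfl⟩, map_zero])
  have hess : ∀ n : E₀ ⧸ K, n ≠ 0 → ∃ r a : R, r • n = a • e ∧ a ≠ 0 := by
    intro n hn
    obtain ⟨y, rfl⟩ := Submodule.Quotient.mk_surjective K n
    rw [Ne, Submodule.Quotient.mk_eq_zero] at hn
    have hnd : ¬ Disjoint (K ⊔ Submodule.span R {y}) (LinearMap.range i) := fun hd ↦
      hn (hK.2 hd le_sup_left (Submodule.mem_sup_right (Submodule.mem_span_singleton_self y)))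
    rw [Submodule.disjoint_def] at hnd
    push Not at hnd
    obtain ⟨_, hz, ⟨a, rfl⟩, ha⟩ := hnd
    obtain ⟨k, hk, w, hw, hkw⟩ := Submodule.mem_sup.1 hz
    obtain ⟨r, rfl⟩ := Submodule.mem_span_singleton.1 hw
    refine ⟨r, a, ?_, fun h ↦ ha (by rw [h, map_zero])⟩
    rw [hmk, ← hkw, Submodule.Quotient.mk_add, (Submodule.Quotient.mk_eq_zero K).2 hk, zero_add,
      Submodule.Quotient.mk_smul]
  have hns := hR.of_essential e hess he
  refine ⟨E₀ ⧸ K, inferInstance, inferInstance, ?_, hns, e, he⟩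
  obtain ⟨h, hh⟩ := Module.Injective.extension_property R E₀ _ _
    (LinearMap.toSpanSingleton R (E₀ ⧸ K) e)
    ((injective_iff_map_eq_zero _).2 he) i
  have hhe (a : R) : K.mkQ (h (a • e)) = a • e := by
    rw [hmk]
    exact congrArg Submodule.Quotient.mk
      ((congrArg h (hmk a).symm).trans (LinearMap.congr_fun hh a))
  have hsec (n : E₀ ⧸ K) : K.mkQ (h n) = n := by
    refine sub_eq_zero.1 (hns _ fun x hx ↦ ?_)
    have key (t : R) : t • (K.mkQ (h n) - n) = K.mkQ (h (t • n)) - t • n := by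
      rw [smul_sub, map_smul, map_smul]
    by_cases hxn : x • n = 0
    · exact ⟨1, by simpa using hx, by rw [one_mul, key, hxn, map_zero, map_zero, sub_zero]⟩
    · obtain ⟨r, a, hra, ha⟩ := hess _ hxn
      rw [← mul_smul] at hra
      refine ⟨r, fun h0 ↦ ha (he a ?_), by rw [key, hra, hhe, sub_self]⟩
      rw [← hra, h0, zero_smul]
  refine ⟨fun X Y _ _ _ _ f hf g ↦ ?_⟩
  obtain ⟨k, hk⟩ := hE₀.out f hf (h ∘ₗ g)
  exact ⟨K.mkQ ∘ₗ k, fun x ↦ by rw [LinearMap.comp_apply, hk, LinearMap.comp_apply, hsec]⟩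

theorem exists_isUniformIdeal_le [IsNoetherianRing R] {L : Ideal R} (hL : L ≠ ⊥) :
    ∃ U ≤ L, IsUniformIdeal U := by
  obtain ⟨K, ⟨U, hUL, hU, hUK⟩, hmax⟩ := set_has_maximal_iff_noetherian.2 ‹IsNoetherian R R›
    {K : Ideal R | ∃ U ≤ L, U ≠ ⊥ ∧ Disjoint K U} ⟨⊥, L, le_rfl, hL, disjoint_bot_left⟩
  refine ⟨U, hUL, hU, fun V W hV hW hVW ↦ ?_⟩
  by_contra! hne
  refine hmax (K ⊔ V) ⟨W, hW.trans hUL, hne.2,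
    hVW.disjoint_sup_left_of_disjoint_sup_right (hUK.mono_right (sup_le hV hW))⟩
    (lt_of_le_of_ne le_sup_left fun h ↦ hne.1 ?_)
  exact disjoint_self.1 (hUK.mono (h ▸ le_sup_right) hV)

/-- A nonzero homomorphism from a uniform ideal into a nonsingular module is injective. -/
theorem IsUniformIdeal.injective {U : Ideal R} (hU : IsUniformIdeal U) (hE : IsNonsingular R E)
    {f : U →ₗ[R] E} (hf : f ≠ 0) : Function.Injective f := by
  rw [← LinearMap.ker_eq_bot]
  by_contra hker
  refine hf (LinearMap.ext fun u ↦ hE _ fun x hx ↦ ?_)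
  by_cases hxu : x • u = 0
  · exact ⟨1, by simpa using hx, by rw [one_mul, ← map_smul, hxu, map_zero]⟩
  have hnd : ¬ Disjoint ((LinearMap.ker f).map U.subtype) (Ideal.span {((x • u : U) : R)}) := by
    intro hd
    rcases hU.2 _ _ (Submodule.map_subtype_le _ _)
      ((Ideal.span_singleton_le_iff_mem _).2 (x • u).2) hd with h | h
    · exact hker (Submodule.map_injective_of_injective U.injective_subtype
        (h.trans (Submodule.map_bot _).symm))
    · exact hxu (Subtype.ext (Ideal.span_singleton_eq_bot.1 h))
  rw [Submodule.disjoint_def] at hnd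
  push Not at hnd
  obtain ⟨_, ⟨v, hv, rfl⟩, hz, hv0⟩ := hnd
  obtain ⟨r, hr⟩ := Ideal.mem_span_singleton'.1 hz
  have hrv : (r * x) • u = v := Subtype.ext (by simpa [mul_assoc] using hr)
  refine ⟨r, fun h0 ↦ hv0 ?_, ?_⟩
  · rw [← hrv, h0, zero_smul, map_zero]
  · rw [← map_smul, hrv]; exact hv

variable [Module.Injective R E]

theorem IsUniformIdeal.homLength_eq_one {U : Ideal R} (hU : IsUniformIdeal U)
    (hE : IsNonsingular R E) (hne : Nontrivial (U →ₗ[R] E)) : homLength R U E = 1 := by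
  rw [homLength, Module.length_eq_one_iff, isSimpleModule_iff_toSpanSingleton_surjective]
  refine ⟨hne, fun f hf g ↦ ?_⟩
  obtain ⟨s, hs⟩ := Module.Injective.extension_property R E _ _ f (hU.injective hE hf) g
  exact ⟨s, hs⟩

theorem IsUniformIdeal.homLength_le_one {U : Ideal R} (hU : IsUniformIdeal U)
    (hE : IsNonsingular R E) : homLength R U E ≤ 1 := by
  rcases subsingleton_or_nontrivial (U →ₗ[R] E) with h | h
  · simp [homLength]
  · exact (hU.homLength_eq_one hE h).le

theorem homLength_self_ne_top [IsNoetherianRing R] (hE : IsNonsingular R E) :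
    homLength R R E ≠ ⊤ := by
  obtain ⟨A, hA, hmax⟩ := set_has_maximal_iff_noetherian.2 ‹IsNoetherian R R›
    {A : Ideal R | homLength R A E ≠ ⊤} ⟨⊥, by simp [homLength]⟩
  by_cases hess : ∀ x : R, x ≠ 0 → ∃ r : R, r * x ≠ 0 ∧ r * x ∈ A
  · have hquot : Subsingleton ((R ⧸ A) →ₗ[R] E) := by
      refine subsingleton_of_forall_eq 0 fun f ↦ ?_
      have h1 : f (A.mkQ 1) = 0 := by
        refine hE _ fun x hx ↦ ?_
        obtain ⟨r, hr, hrA⟩ := hess x hx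
        refine ⟨r, hr, ?_⟩
        rw [← map_smul, ← map_smul, smul_eq_mul, mul_one, Submodule.mkQ_apply,
          (Submodule.Quotient.mk_eq_zero A).2 hrA, map_zero]
      refine Submodule.linearMap_qext _ (LinearMap.ext_ring ?_)
      exact h1
    rw [homLength_eq_add_of_exact A.injective_subtype A.mkQ_surjective
      (LinearMap.exact_subtype_mkQ A)]
    rwa [homLength, Module.length_eq_zero, zero_add]
  · push Not at hess
    obtain ⟨x, hx, hxA⟩ := hess
    obtain ⟨U, hUx, hU⟩ := exists_isUniformIdeal_le (L := Ideal.span {x})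
      (by simpa using hx)
    refine (hmax (A ⊔ U) ?_ (lt_of_le_of_ne le_sup_left fun h ↦ hU.1 ?_)).elim
    · let f : (A × U) →ₗ[R] (A ⊔ U : Ideal R) :=
        (Submodule.inclusion le_sup_left).coprod (Submodule.inclusion le_sup_right)
      have hf : Function.Surjective f := by
        rintro ⟨y, hy⟩
        obtain ⟨a, ha, u, hu, rfl⟩ := Submodule.mem_sup.1 hy
        exact ⟨(⟨a, ha⟩, ⟨u, hu⟩), rfl⟩
      refine ne_top_of_le_ne_top ?_ (homLength_le_of_surjective f hf)
      rw [homLength_prod]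
      exact WithTop.add_ne_top.2
        ⟨hA, ne_top_of_le_ne_top ENat.one_ne_top (hU.homLength_le_one hE)⟩
    · rw [eq_bot_iff]
      intro u hu
      obtain ⟨r, rfl⟩ := Ideal.mem_span_singleton'.1 (hUx hu)
      by_contra hne
      exact hxA r hne (h ▸ Submodule.mem_sup_right hu)

end Nonsingular

/-- A finitely generated projective module over a (noncommutative) local ring is free. -/
theorem exists_linearEquiv_pi_of_projective {R M : Type u} [Ring R] [AddCommGroup M] [Module R M]
    (hlocal : ∀ x : R, x ∉ Ring.jacobson R → IsUnit x) [Module.Finite R M] [Module.Projective R M] :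
    ∃ k : ℕ, Nonempty (M ≃ₗ[R] (Fin k → R)) := by
  classical
  have hex : ∃ k : ℕ, ∃ f : (Fin k → R) →ₗ[R] M, Function.Surjective f :=
    Module.Finite.exists_fin' R M
  obtain ⟨π, hπ⟩ := Nat.find_spec hex
  have hmin := fun m ↦ Nat.find_min (m := m) hex
  generalize Nat.find hex = k at π hπ hmin
  have hcoord : ∀ v ∈ LinearMap.ker π, ∀ i, v i ∈ Ring.jacobson R := by
    intro v hv i
    by_contra hvi
    obtain ⟨c, hc⟩ := hlocal _ hvi
    obtain _ | m := k
    · exact i.elim0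
    refine hmin m m.lt_succ_self ⟨π ∘ₗ Function.ExtendByZero.linearMap R i.succAbove, fun y ↦ ?_⟩
    obtain ⟨x, rfl⟩ := hπ y
    let x' := x - (x i * (c⁻¹ : Rˣ)) • v
    have hx' : x' i = 0 := by simp [x', ← hc]
    refine ⟨x' ∘ i.succAbove, ?_⟩
    have hext : Function.ExtendByZero.linearMap R i.succAbove (x' ∘ i.succAbove) = x' := by
      ext j
      simp only [Function.ExtendByZero.linearMap_apply]
      refine Fin.succAboveCases i ?_ (fun l ↦ ?_) j
      · rw [Function.extend_apply', hx', Pi.zero_apply]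
        rintro ⟨l, hl⟩
        exact Fin.succAbove_ne i l hl
      · rw [i.succAbove_right_injective.extend_apply, Function.comp_apply]
    rw [LinearMap.comp_apply, hext, map_sub, map_smul, LinearMap.mem_ker.1 hv, smul_zero, sub_zero]
  obtain ⟨s, hs⟩ := Module.projective_lifting_property π LinearMap.id hπ
  let q : (Fin k → R) →ₗ[R] (Fin k → R) := LinearMap.id - s ∘ₗ π
  have hq (v) : q v ∈ LinearMap.ker π := by
    have := LinearMap.congr_fun hs (π v)
    simp only [LinearMap.comp_apply, LinearMap.id_apply] at this
    simp [q, this]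
  have hqv {v} (hv : v ∈ LinearMap.ker π) : q v = v := by
    simp [q, LinearMap.mem_ker.1 hv]
  have hrange : LinearMap.ker π = LinearMap.range q := le_antisymm
    (fun v hv ↦ ⟨v, hqv hv⟩) (by rintro _ ⟨v, rfl⟩; exact hq v)
  have hbot : LinearMap.ker π = ⊥ := by
    refine Submodule.FG.eq_bot_of_le_jacobson_smul ?_ fun v hv ↦ ?_
    · rw [hrange, LinearMap.range_eq_map]
      exact Module.Finite.fg_top.map q
    · rw [← hqv hv, ← Finset.univ_sum_single v, map_sum]
      refine Submodule.sum_mem _ fun i _ ↦ ?_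
      have : Pi.single i (v i) = v i • (Pi.single i 1 : Fin k → R) := by
        rw [← Pi.single_smul, smul_eq_mul, mul_one]
      rw [this, map_smul]
      exact Submodule.smul_mem_smul (hcoord v hv i) (hq _)
  exact ⟨k, ⟨(LinearEquiv.ofBijective π ⟨LinearMap.ker_eq_bot.1 hbot, hπ⟩).symm⟩⟩

/-- Over a local noetherian ring, the Euler characteristic of a finitely generated module of finite
projective dimension computes its `homLength` as a multiple of that of the ring. -/
theorem exists_homLength_add_eq {R E : Type u} [Ring R] [IsNoetherianRing R] [AddCommGroup E]
    [Module R E] [Module.Injective R E] (hlocal : ∀ x : R, x ∉ Ring.jacobson R → IsUnit x)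
    (n : ℕ) (M : Type u) [AddCommGroup M] [Module R M] [Module.Finite R M]
    (hM : HasProjectiveDimensionLT (ModuleCat.of R M) (n + 1)) :
    ∃ a b : ℕ, homLength R M E + a * homLength R R E = b * homLength R R E := by
  induction n generalizing M with
  | zero =>
    rw [zero_add, ← projective_iff_hasProjectiveDimensionLT_one,
      ← IsProjective.iff_projective] at hM
    obtain ⟨k, ⟨e⟩⟩ := exists_linearEquiv_pi_of_projective (M := M) hlocal
    exact ⟨0, k, by rw [homLength_congr e, homLength_pi, Nat.cast_zero, zero_mul, add_zero]⟩
  | succ n ih =>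
    obtain ⟨k, f, hf⟩ := Module.Finite.exists_fin' R M
    have : Projective (ModuleCat.of R (Fin k → R)) :=
      (IsProjective.iff_projective _).1 inferInstance
    have hK := (LinearMap.shortExact_shortComplexKer hf).hasProjectiveDimensionLT_X₁ (n + 1)
      inferInstance hM
    obtain ⟨a, b, hab⟩ := ih (LinearMap.ker f) hK
    have hadd := homLength_eq_add_of_exact (E := E) (LinearMap.ker f).injective_subtype hf
      (LinearMap.exact_subtype_ker_map f)
    rw [homLength_pi] at hadd
    refine ⟨b, k + a, ?_⟩
    rw [← hab, ← add_assoc, ← hadd, Nat.cast_add, add_mul]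

/-- Walker's theorem: a scalar local, (left and right) noetherian, semiprime
ring of finite global dimension is a domain.  Here "scalar local" is expressed as: every
element outside the Jacobson radical is a unit (so `R` modulo its Jacobson radical is a
division ring), "semiprime" as `aRa = 0 → a = 0`, and "finite global dimension" as the
vanishing of all Ext groups `Ext^(n+1)(M,N)` for some `n`. -/
theorem stmt_3 (R : Type u) [Ring R] [Nontrivial R]
    [IsNoetherianRing R] [IsNoetherianRing Rᵐᵒᵖ]
    (hscalarlocal : ∀ x : R, x ∉ (⊥ : Ideal R).jacobson → IsUnit x)
    (hsemiprime : ∀ a : R, (∀ r : R, a * r * a = 0) → a = 0)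
    (hgldim : ∃ n : ℕ, ∀ M N : ModuleCat.{u} R,
      Subsingleton (((Ext ℤ (ModuleCat.{u} R) (n + 1)).obj (op M)).obj N)) :
    IsDomain R := by
  obtain ⟨n, hn⟩ := hgldim
  have hpd := hasProjectiveDimensionLT_of_subsingleton_ext n
    fun M N ↦ subsingleton_abelianExt_succ M N n (hn M N)
  rw [Ideal.jacobson_bot] at hscalarlocal
  obtain ⟨E, _, _, _, hE, e, he⟩ :=
    exists_injective_isNonsingular (isNonsingular_self hsemiprime)
  obtain ⟨U, -, hU⟩ := exists_isUniformIdeal_le (R := R) (L := ⊤) top_ne_bot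
  have hne : Nontrivial (U →ₗ[R] E) := by
    obtain ⟨u, hu, hu0⟩ := Submodule.exists_mem_ne_zero_of_ne_bot hU.1
    refine ⟨LinearMap.toSpanSingleton R E e ∘ₗ U.subtype, 0, fun h ↦ hu0 (he u ?_)⟩
    exact LinearMap.congr_fun h ⟨u, hu⟩
  obtain ⟨a, b, hab⟩ := exists_homLength_add_eq (E := E) hscalarlocal n U (hpd _)
  rw [hU.homLength_eq_one hE hne] at hab
  have hone : homLength R R E = 1 := by
    obtain ⟨l, hl⟩ := ENat.ne_top_iff_exists.1 (homLength_self_ne_top (R := R) hE)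
    rw [← hl] at hab ⊢
    norm_cast at hab ⊢
    exact Nat.dvd_one.1 ((Nat.dvd_add_left (Dvd.intro_left a rfl)).1 ⟨b, by rw [hab, mul_comm]⟩)
  rw [homLength, Module.length_eq_one_iff, isSimpleModule_iff_toSpanSingleton_surjective] at hone
  have : NoZeroDivisors R := by
    refine ⟨fun {x y} hxy ↦ or_iff_not_imp_right.2 fun hy ↦ he x ?_⟩
    have hg : LinearMap.toSpanSingleton R E (y • e) ≠ 0 := fun h ↦ hy (he y (by
      simpa using LinearMap.congr_fun h 1))
    obtain ⟨s, hs⟩ := hone.2 _ hg (LinearMap.toSpanSingleton R E e)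
    have hse : s (y • e) = e := by simpa using LinearMap.congr_fun hs 1
    rw [← hse, ← map_smul, ← mul_smul, hxy, zero_smul, map_zero]
  exact NoZeroDivisors.to_isDomain R
end

section
/- There exists a continuous injective homomorphism of F_p-algebras from the power series ring F_p[[x,y,z]] in three variables to the power series ring F_p[[a,b]] in two variables. Concretely, choose u = u(a) ∈ a·F_p[[a]] such that a and u are algebraically independent over F_p; then the unique continuous F_p-algebra homomorphism θ with θ(x) = b, θ(y) = ab, θ(z) = ub is injective. -/
/-- Over a countable domain there are only countably many power series algebraic over the
polynomials, so some power series is transcendental. -/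
theorem PowerSeries.exists_transcendental (R : Type*) [CommRing R] [IsDomain R] [Countable R] :
    ∃ u : PowerSeries R, Transcendental (Polynomial R) u := by
  have : FaithfulSMul (Polynomial R) (PowerSeries R) := by
    refine (faithfulSMul_iff_algebraMap_injective _ _).2 fun P Q h => Polynomial.coe_injective R ?_
    simpa [PowerSeries.algebraMap_apply'] using h
  have : Countable (Polynomial R) :=
    Cardinal.mk_le_aleph0_iff.1 (Polynomial.cardinalMk_le_max.trans (by simp))
  by_contra! h
  have huniv : {x : PowerSeries R | IsAlgebraic (Polynomial R) x} = Set.univ :=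
    Set.eq_univ_of_forall fun x => not_not.1 (h x)
  have hcount : Countable (PowerSeries R) :=
    Set.countable_univ_iff.1 (huniv ▸ Algebraic.countable (Polynomial R) (PowerSeries R))
  classical
  have hinj : Function.Injective
      fun s : Set ℕ => PowerSeries.mk fun n => if n ∈ s then (1 : R) else 0 := by
    intro s t hst
    ext n
    have hn := congrArg (PowerSeries.coeff n) hst
    simp only [PowerSeries.coeff_mk] at hn
    by_cases hs : n ∈ s <;> by_cases ht : n ∈ t <;> simp_all
  have := hinj.countable
  obtain ⟨e, he⟩ := exists_surjective_nat (Set ℕ)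
  exact Function.cantor_surjective e he

namespace MvPowerSeries

variable {R : Type*} [CommRing R]

/-- The embedding `R⟦a⟧ → R⟦a, b⟧`, where `a = X 0` and `b = X 1`. -/
noncomputable def ofPowerSeries : PowerSeries R →ₐ[R] MvPowerSeries (Fin 2) R :=
  rename (⟨fun _ => 0, fun _ _ _ => Subsingleton.elim _ _⟩ : Unit ↪ Fin 2)

theorem ofPowerSeries_X : ofPowerSeries (PowerSeries.X : PowerSeries R) = X 0 :=
  rename_X _ _

theorem coeff_X_one_pow_mul_ofPowerSeries (m n i : ℕ) (g : PowerSeries R) :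
    coeff (Finsupp.single 0 i + Finsupp.single 1 n) (X 1 ^ m * ofPowerSeries g) =
      if m = n then PowerSeries.coeff i g else 0 := by
  have hrange (k : ℕ) (hk : k ≠ 0) :
      coeff (Finsupp.single 0 i + Finsupp.single 1 k) (ofPowerSeries g) = 0 := by
    refine coeff_rename_eq_zero _ _ ?_
    rintro ⟨d, hd⟩
    have h1 := DFunLike.congr_fun hd 1
    rw [Finsupp.mapDomain_of_notMem_range _ _ (by rintro ⟨_, h⟩; exact zero_ne_one h)] at h1
    simp at h1
    exact hk h1.symm
  have hzero : coeff (Finsupp.single 0 i) (ofPowerSeries g) = PowerSeries.coeff i g := by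
    have := coeff_embDomain_rename (⟨fun _ => 0, fun _ _ _ => Subsingleton.elim _ _⟩ :
      Unit ↪ Fin 2) g (Finsupp.single () i)
    rwa [Finsupp.embDomain_single] at this
  rw [X_pow_eq]
  rcases lt_or_ge n m with h | h
  · rw [if_neg h.ne', coeff_monomial_mul, if_neg]
    intro hle
    have h1 := hle 1
    simp at h1
    omega
  · obtain ⟨k, rfl⟩ := Nat.exists_eq_add_of_le h
    rw [Finsupp.single_add, add_left_comm, coeff_add_monomial_mul, one_mul]
    rcases eq_or_ne k 0 with rfl | hk
    · simpa using hzero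
    · rw [hrange k hk, if_neg (by omega)]

/-- The family `b, ab, ub` in `R⟦a, b⟧` attached to a power series `u = u(a)`. -/
noncomputable def blowUp (u : PowerSeries R) : Fin 3 → MvPowerSeries (Fin 2) R :=
  ![X 1, X 0 * X 1, ofPowerSeries u * X 1]

theorem hasSubst_blowUp (u : PowerSeries R) : HasSubst (blowUp u) := by
  refine hasSubst_of_constantCoeff_zero fun s => ?_
  fin_cases s <;> simp [blowUp]

theorem prod_blowUp_pow (u : PowerSeries R) (d : Fin 3 →₀ ℕ) :
    (d.prod fun s k => blowUp u s ^ k) =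
      X 1 ^ d.degree * ofPowerSeries (PowerSeries.X ^ d 1 * u ^ d 2) := by
  rw [Finsupp.prod_fintype _ _ (by simp), Finsupp.degree_eq_sum]
  simp only [Fin.prod_univ_three, Fin.sum_univ_three, blowUp, map_mul, map_pow, ofPowerSeries_X]
  simp
  ring

/-- If `u` is transcendental over `R[a]`, the substitution `x ↦ b, y ↦ ab, z ↦ ub` is injective:
the coefficient of `bⁿ` in the image of `f` is the degree `n` part of `f` evaluated at `(1, a, u)`. -/
theorem substAlgHom_blowUp_injective {u : PowerSeries R} (hu : Transcendental (Polynomial R) u) :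
    Function.Injective (substAlgHom (R := R) (hasSubst_blowUp u)) := by
  classical
  rw [injective_iff_map_eq_zero]
  intro f hf
  have key (n : ℕ) : ∑ d ∈ Finset.finsuppAntidiag Finset.univ n,
      Polynomial.monomial (d 2) (Polynomial.monomial (d 1) (coeff d f)) = 0 := by
    refine (transcendental_iff.1 hu) _ (PowerSeries.ext fun i => ?_)
    have hcoeff := congrArg (coeff (Finsupp.single 0 i + Finsupp.single 1 n)) hf
    rw [substAlgHom_apply, coeff_subst (hasSubst_blowUp u),
      finsum_eq_sum_of_support_subset (s := Finset.finsuppAntidiag Finset.univ n)] at hcoeff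
    · rw [map_zero] at hcoeff ⊢
      rw [← hcoeff, map_sum, map_sum]
      refine Finset.sum_congr rfl fun d hd => ?_
      have hdeg : d.degree = n := by
        rw [Finsupp.degree_eq_sum]
        exact (Finset.mem_finsuppAntidiag.1 hd).1
      have hmon : PowerSeries.monomial (d 1) (coeff d f) = coeff d f • PowerSeries.X ^ d 1 := by
        rw [PowerSeries.X_pow_eq, ← map_smul, smul_eq_mul, mul_one]
      rw [prod_blowUp_pow, coeff_X_one_pow_mul_ofPowerSeries, if_pos hdeg,
        Polynomial.aeval_monomial, PowerSeries.algebraMap_apply', Polynomial.coe_monomial,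
        Algebra.algebraMap_self, PowerSeries.map_id, id_eq, hmon, smul_mul_assoc, map_smul]
    · intro d hd
      rw [Function.mem_support, prod_blowUp_pow, coeff_X_one_pow_mul_ofPowerSeries] at hd
      have hdeg : d.degree = n := by
        by_contra h
        simp [h] at hd
      simpa [Finset.mem_finsuppAntidiag, Finsupp.degree_eq_sum] using hdeg
  ext d
  have hd := congrArg (fun P => (P.coeff (d 2)).coeff (d 1)) (key d.degree)
  simp only [Polynomial.finsetSum_coeff] at hd
  rw [Finset.sum_eq_single d] at hd
  · simpa using hd
  · intro e he hne
    have hdeg : e.degree = d.degree := by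
      rw [Finsupp.degree_eq_sum]
      exact (Finset.mem_finsuppAntidiag.1 he).1
    rw [Finsupp.degree_eq_sum, Finsupp.degree_eq_sum, Fin.sum_univ_three,
      Fin.sum_univ_three] at hdeg
    rw [Polynomial.coeff_monomial]
    split_ifs with h2
    · rw [Polynomial.coeff_monomial, if_neg]
      intro h1
      refine hne (Finsupp.ext fun s => ?_)
      fin_cases s <;> grind
    · simp
  · intro h
    simp [Finset.mem_finsuppAntidiag, Finsupp.degree_eq_sum] at h

end MvPowerSeries

/-- there is a continuous injective homomorphism of `F_p`-algebras from the
power series ring `F_p[[x,y,z]]` in three variables to the power series ring `F_p[[a,b]]`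
in two variables.  Here each power series ring `F_p[[X_i]] = ((σ →₀ ℕ) → F_p)` carries its
natural (product of discrete) topology. -/
theorem stmt_6 (p : ℕ) [Fact p.Prime] :
    letI : TopologicalSpace (ZMod p) := ⊥
    letI : TopologicalSpace (MvPowerSeries (Fin 3) (ZMod p)) :=
      inferInstanceAs (TopologicalSpace ((Fin 3 →₀ ℕ) → ZMod p))
    letI : TopologicalSpace (MvPowerSeries (Fin 2) (ZMod p)) :=
      inferInstanceAs (TopologicalSpace ((Fin 2 →₀ ℕ) → ZMod p))
    ∃ θ : MvPowerSeries (Fin 3) (ZMod p) →ₐ[ZMod p] MvPowerSeries (Fin 2) (ZMod p),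
      Continuous θ ∧ Function.Injective θ := by
  obtain ⟨u, hu⟩ := PowerSeries.exists_transcendental (ZMod p)
  refine ⟨MvPowerSeries.substAlgHom (MvPowerSeries.hasSubst_blowUp u), ?_,
    MvPowerSeries.substAlgHom_blowUp_injective hu⟩
  let : UniformSpace (ZMod p) := ⊥
  rw [MvPowerSeries.coe_substAlgHom]
  exact MvPowerSeries.continuous_subst (MvPowerSeries.hasSubst_blowUp u)
end
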